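/- arXiv:1503.00093 — 2 statements merged into one kernel-verified Lean document; each statement's English description precedes it below -/
import Mathlib

section
/- Let G : ℂ → ℂ be a Schwartz function and let k = k₁ + ik₂ ∈ ℂ with k ≠ 0. Then for every z ∈ ℂ, ∂̄⁻¹[e_{−k} G](z) = (2/(ik₁ − k₂)) ( ∂̄⁻¹[e_{−k} ∂̄G](z) − e_{−k}(z) G(z) ). In particular, |∂̄⁻¹[e_{−k} G](z)| ≤ (2/|k|) ( |∂̄⁻¹[e_{−k} ∂̄G](z)| + |G(z)| ) for every z ∈ ℂ. -/
open MeasureTheory Complex ComplexConjugate Filter Bornology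
open scoped ENNReal Topology SchwartzMap

noncomputable section

/-- `e_k(z) = exp(i(conj k · z + k · conj z)/2)`. -/
def ek (k z : ℂ) : ℂ := Complex.exp (Complex.I * (conj k * z + k * conj z) / 2)

/-- The solid Cauchy transform `∂̄⁻¹[h](z) = (1/π) ∫ h(w)/(z-w) dA(w)`. -/
def dbarInv (h : ℂ → ℂ) (z : ℂ) : ℂ := (Real.pi : ℂ)⁻¹ * ∫ w : ℂ, h w / (z - w)

/-- The solid Cauchy transform `∂_z⁻¹[h](z) = (1/π) ∫ h(w)/(conj z - conj w) dA(w)`. -/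
def dzInv (h : ℂ → ℂ) (z : ℂ) : ℂ := (Real.pi : ℂ)⁻¹ * ∫ w : ℂ, h w / (conj z - conj w)

/-- The operator `S^k_q[F] = ∂̄⁻¹[e_{-k} q ∂_z⁻¹[e_k conj(q) F]]`. -/
def Sk (k : ℂ) (q F : ℂ → ℂ) : ℂ → ℂ :=
  dbarInv fun z => ek (-k) z * q z * dzInv (fun w => ek k w * conj (q w) * F w) z

/-- The Fourier transform on `ℂ ≅ ℝ²`. -/
def FT (f : ℂ → ℂ) (ξ : ℂ) : ℂ :=
  ∫ z : ℂ, Complex.exp (-(2 * Real.pi * Complex.I) * ((z.re * ξ.re + z.im * ξ.im : ℝ) : ℂ)) * f z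

/-- The inverse Fourier transform on `ℂ ≅ ℝ²`. -/
def FTinv (f : ℂ → ℂ) (x : ℂ) : ℂ :=
  ∫ ξ : ℂ, Complex.exp ((2 * Real.pi * Complex.I) * ((x.re * ξ.re + x.im * ξ.im : ℝ) : ℂ)) * f ξ

/-- `D^s`, the Fourier multiplier with symbol `|ξ|^s`. -/
def Ds (s : ℝ) (f : ℂ → ℂ) : ℂ → ℂ :=
  FTinv fun ξ => ((‖ξ‖ ^ s : ℝ) : ℂ) * FT f ξ

/-- The weighted Sobolev norm
`‖q‖_{H^{s,s}} = max {‖q‖₂, ‖D^s q‖₂, ‖|·|^s q‖₂}`, where by Plancherel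
`‖D^s q‖₂ = ‖ |ξ|^s (FT q)(ξ) ‖₂`. -/
def HssNorm (s : ℝ) (q : ℂ → ℂ) : ℝ≥0∞ :=
  max (eLpNorm q 2 volume)
    (max (eLpNorm (fun ξ : ℂ => ((‖ξ‖ ^ s : ℝ) : ℂ) * FT q ξ) 2 volume)
      (eLpNorm (fun z : ℂ => ((‖z‖ ^ s : ℝ) : ℂ) * q z) 2 volume))

/-- The Cauchy–Riemann operator `∂̄ = (∂/∂z₁ + i ∂/∂z₂)/2`. -/
def dbar (G : ℂ → ℂ) (z : ℂ) : ℂ := (fderiv ℝ G z 1 + Complex.I * fderiv ℝ G z Complex.I) / 2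

end

/-!
In polar coordinates `w = z + r * exp (θ * I)` around `z` the Jacobian `r` cancels the singularity
of the Cauchy kernel, and `dbar F` splits into a radial and an angular derivative. Integrated along
rays the former gives `-F z`, integrated along circles the latter gives `0`; this is the
Cauchy–Pompeiu formula `dbarInv (dbar F) z = F z`. For `F = ek k * G` one has
`dbar F = ek k * dbar G + (I * k / 2) * F`, so that the formula can be solved for `dbarInv F z`
when `k ≠ 0`.
-/

section PolarCoordinates

open Set

variable {E : Type*} [NormedAddCommGroup E] [NormedSpace ℝ E]

theorem polarCoord_symm_eq_circleMap (p : ℝ × ℝ) :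
    Complex.polarCoord.symm p = circleMap 0 p.1 p.2 := by
  simp [circleMap_zero, exp_mul_I]

theorem volume_restrict_polarCoord_target :
    (volume : Measure (ℝ × ℝ)).restrict polarCoord.target =
      (volume.restrict (Ioi 0)).prod (volume.restrict (Ioo (-Real.pi) Real.pi)) := by
  rw [polarCoord_target, Measure.volume_eq_prod, Measure.prod_restrict]

theorem integral_eq_integral_circleMap (f : ℂ → E) (z : ℂ) :
    ∫ w, f w = ∫ p in polarCoord.target, p.1 • f (circleMap z p.1 p.2) := by
  rw [← integral_add_left_eq_self f z, ← Complex.integral_comp_polarCoord_symm]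
  simp only [polarCoord_symm_eq_circleMap, circleMap, zero_add]

theorem integrableOn_fst_smul_circleMap {f : ℂ → E} (hf : Integrable f) (z : ℂ) :
    IntegrableOn (fun p : ℝ × ℝ => p.1 • f (circleMap z p.1 p.2)) polarCoord.target := by
  have hs : MeasurableSet polarCoord.target := polarCoord.open_target.measurableSet
  have hf_prod : Integrable (fun p => f (z + measurableEquivRealProd.symm p)) :=
    (volume_preserving_equiv_real_prod.symm.integrable_comp_emb
      measurableEquivRealProd.symm.measurableEmbedding).2 (hf.comp_add_left z)
  refine ((integrableOn_image_iff_integrableOn_abs_det_fderiv_smul volume hs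
    (fun p _ => (hasFDerivAt_polarCoord_symm p).hasFDerivWithinAt)
    polarCoord.symm.injOn _).1 hf_prod.integrableOn).congr_fun (fun p hp => ?_) hs
  simp only [det_fderivPolarCoordSymm, abs_of_pos (show 0 < p.1 from hp.1),
    measurableEquivRealProd_symm_polarCoord_symm_apply, polarCoord_symm_eq_circleMap, circleMap,
    zero_add]

end PolarCoordinates

section CauchyKernel

open Set Metric

variable {E : Type*} [NormedAddCommGroup E] [NormedSpace ℂ E]

theorem smul_inv_sub_circleMap {r : ℝ} (hr : r ≠ 0) (z : ℂ) (θ : ℝ) :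
    r • (z - circleMap z r θ)⁻¹ = -conj (exp (θ * I)) := by
  rw [← inv_eq_conj (norm_exp_ofReal_mul_I θ), circleMap, sub_add_cancel_left, inv_neg, smul_neg,
    mul_inv, ← ofReal_inv, ← real_smul, smul_inv_smul₀ hr]

theorem integral_inv_sub_smul (f : ℂ → E) (z : ℂ) :
    ∫ w, (z - w)⁻¹ • f w =
      -∫ p in polarCoord.target, conj (exp (p.2 * I)) • f (circleMap z p.1 p.2) := by
  rw [integral_eq_integral_circleMap _ z, ← integral_neg]
  refine setIntegral_congr_fun polarCoord.open_target.measurableSet fun p hp => ?_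
  simp only [← smul_assoc, smul_inv_sub_circleMap (show 0 < p.1 from hp.1).ne', neg_smul]

theorem integrableOn_circleMap {f : ℂ → E} {z : ℂ}
    (hf : Integrable fun w => (z - w)⁻¹ • f w) :
    IntegrableOn (fun p : ℝ × ℝ => f (circleMap z p.1 p.2)) polarCoord.target := by
  have hnorm (p : ℝ × ℝ) : ‖-exp (p.2 * I)‖ = 1 := by rw [norm_neg, norm_exp_ofReal_mul_I]
  refine IntegrableOn.congr_fun
    ((integrableOn_fst_smul_circleMap hf z).bdd_smul 1
      (φ := fun p : ℝ × ℝ => -exp (p.2 * I)) (by fun_prop) (ae_of_all _ fun p => (hnorm p).le))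
    (fun p hp => ?_) polarCoord.open_target.measurableSet
  have hcancel : -exp (p.2 * I) * -conj (exp (p.2 * I)) = 1 := by
    rw [neg_mul_neg, mul_conj', norm_exp_ofReal_mul_I, ofReal_one, one_pow]
  simp only [Pi.smul_apply', ← smul_assoc, smul_inv_sub_circleMap (show 0 < p.1 from hp.1).ne']
  rw [smul_eq_mul, hcancel, one_smul]

theorem integrableOn_ball_inv (R : ℝ) : IntegrableOn (fun w : ℂ => w⁻¹) (ball 0 R) := by
  refine integrableOn_ball_of_norm_le_rpow (C := 1) (α := 1) ?_ ?_ (ae_of_all _ fun w => ?_) ?_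
  · simp
  · simp
  · rw [norm_inv, Real.rpow_neg_one, one_mul]
  · exact measurable_inv.aestronglyMeasurable

theorem integrable_inv_sub_smul {f : ℂ → E} (hf : Integrable f) (hf_bdd : MemLp f ∞) (z : ℂ) :
    Integrable fun w => (z - w)⁻¹ • f w := by
  suffices Integrable fun w => w⁻¹ • f (z - w) by simpa using this.comp_sub_left z
  have hg : Integrable fun w => f (z - w) := hf.comp_sub_left z
  have hg_bdd : MemLp (fun w => f (z - w)) ∞ :=
    hf_bdd.comp_measurePreserving (volume.measurePreserving_sub_left z)
  rw [← integrableOn_univ, ← union_compl_self (ball (0 : ℂ) 1)]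
  refine IntegrableOn.union ((integrableOn_ball_inv 1).smul_of_top_left (hg_bdd.restrict _))
    (hg.integrableOn.bdd_smul 1 measurable_inv.aestronglyMeasurable ?_)
  filter_upwards [ae_restrict_mem measurableSet_ball.compl] with w hw
  rw [norm_inv]
  exact inv_le_one_of_one_le₀ (by simpa using hw)

end CauchyKernel

section FundamentalTheorem

open Set

variable {E : Type*} [NormedAddCommGroup E] [NormedSpace ℝ E]

theorem integrable_clm_apply_exp_mul {α : Type*} [MeasurableSpace α] {μ : Measure α}
    {A : α → ℂ →L[ℝ] E} {φ : α → ℝ} (hA : Integrable A μ) (hφ : Measurable φ) (c : ℂ) :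
    Integrable (fun a => A a (exp (φ a * I) * c)) μ :=
  (ContinuousLinearMap.id ℝ (ℂ →L[ℝ] E)).integrable_of_bilin_of_bdd_right ‖c‖ hA
    (by fun_prop) (ae_of_all _ fun a => by rw [norm_mul, norm_exp_ofReal_mul_I, one_mul])

theorem hasDerivAt_circleMap_radius (z : ℂ) (r θ : ℝ) :
    HasDerivAt (fun r => circleMap z r θ) (exp (θ * I)) r := by
  simpa [circleMap] using ((hasDerivAt_id r).ofReal_comp.mul_const (exp (θ * I))).const_add z

variable [CompleteSpace E] {F : ℂ → E} {z : ℂ}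

theorem integral_Ioi_fderiv_circleMap {θ : ℝ} (hF : Differentiable ℝ F)
    (hFi : IntegrableOn (fun r => F (circleMap z r θ)) (Ioi 0))
    (hF'i : IntegrableOn (fun r => fderiv ℝ F (circleMap z r θ)) (Ioi 0)) :
    ∫ r in Ioi 0, fderiv ℝ F (circleMap z r θ) (exp (θ * I)) = -F z := by
  have hderiv (r : ℝ) : HasDerivAt (fun r => F (circleMap z r θ))
      (fderiv ℝ F (circleMap z r θ) (exp (θ * I))) r :=
    (hF _).hasFDerivAt.comp_hasDerivAt r (hasDerivAt_circleMap_radius z r θ)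
  have hderiv_int := hF'i.apply_continuousLinearMap (exp (θ * I))
  have hlim : Tendsto (fun r => F (circleMap z r θ)) atTop (𝓝 0) :=
    tendsto_zero_of_hasDerivAt_of_integrableOn_Ioi (fun r _ => hderiv r) hderiv_int hFi
  simpa using integral_Ioi_of_hasDerivAt_of_tendsto' (fun r _ => hderiv r) hderiv_int hlim

theorem integral_Ioo_fderiv_circleMap {r : ℝ} (hr : r ≠ 0) (hF : Differentiable ℝ F)
    (hF'i : IntegrableOn (fun θ => fderiv ℝ F (circleMap z r θ)) (Ioo (-Real.pi) Real.pi)) :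
    ∫ θ in Ioo (-Real.pi) Real.pi, fderiv ℝ F (circleMap z r θ) (exp (θ * I) * I) = 0 := by
  have hderiv (θ : ℝ) : HasDerivAt (fun θ => F (circleMap z r θ))
      (r • fderiv ℝ F (circleMap z r θ) (exp (θ * I) * I)) θ := by
    rw [← map_smul, real_smul, ← mul_assoc, ← circleMap_zero]
    exact (hF _).hasFDerivAt.comp_hasDerivAt θ (hasDerivAt_circleMap z r θ)
  have hpi : -Real.pi ≤ Real.pi := by linarith [Real.pi_pos]
  have hderiv_int : IntervalIntegrable
      (fun θ => r • fderiv ℝ F (circleMap z r θ) (exp (θ * I) * I)) volume (-Real.pi) Real.pi :=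
    (intervalIntegrable_iff_integrableOn_Ioo_of_le hpi).2
      ((integrable_clm_apply_exp_mul hF'i measurable_id I).smul r)
  have hperiod : circleMap z r Real.pi = circleMap z r (-Real.pi) := by
    simp [circleMap, exp_neg]
  have hftc := intervalIntegral.integral_eq_sub_of_hasDerivAt (fun θ _ => hderiv θ) hderiv_int
  rw [hperiod, sub_self, intervalIntegral.integral_smul, intervalIntegral.integral_of_le hpi,
    integral_Ioc_eq_integral_Ioo] at hftc
  exact (smul_eq_zero.1 hftc).resolve_left hr

theorem integral_polarCoord_target_fderiv_radial (hF : Differentiable ℝ F)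
    (hFi : IntegrableOn (fun p : ℝ × ℝ => F (circleMap z p.1 p.2)) polarCoord.target)
    (hF'i : IntegrableOn (fun p : ℝ × ℝ => fderiv ℝ F (circleMap z p.1 p.2)) polarCoord.target) :
    ∫ p in polarCoord.target, fderiv ℝ F (circleMap z p.1 p.2) (exp (p.2 * I)) =
      -((2 * Real.pi) • F z) := by
  have hradial_int : IntegrableOn
      (fun p : ℝ × ℝ => fderiv ℝ F (circleMap z p.1 p.2) (exp (p.2 * I))) polarCoord.target := by
    simpa only [IntegrableOn, mul_one] using integrable_clm_apply_exp_mul hF'i measurable_snd 1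
  rw [IntegrableOn, volume_restrict_polarCoord_target] at hFi hF'i hradial_int
  rw [volume_restrict_polarCoord_target, integral_prod_symm _ hradial_int]
  have hray : ∀ᵐ θ ∂volume.restrict (Ioo (-Real.pi) Real.pi),
      ∫ r in Ioi 0, fderiv ℝ F (circleMap z r θ) (exp (θ * I)) = -F z := by
    filter_upwards [hFi.prod_left_ae, hF'i.prod_left_ae] with θ hFθ hF'θ
    exact integral_Ioi_fderiv_circleMap hF hFθ hF'θ
  rw [integral_congr_ae hray, setIntegral_const, Real.volume_real_Ioo_of_le (by
    linarith [Real.pi_pos]), smul_neg, sub_neg_eq_add, two_mul]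

theorem integral_polarCoord_target_fderiv_angular (hF : Differentiable ℝ F)
    (hF'i : IntegrableOn (fun p : ℝ × ℝ => fderiv ℝ F (circleMap z p.1 p.2)) polarCoord.target) :
    ∫ p in polarCoord.target, fderiv ℝ F (circleMap z p.1 p.2) (exp (p.2 * I) * I) = 0 := by
  have hangular_int : IntegrableOn
      (fun p : ℝ × ℝ => fderiv ℝ F (circleMap z p.1 p.2) (exp (p.2 * I) * I))
      polarCoord.target :=
    integrable_clm_apply_exp_mul hF'i measurable_snd I
  rw [IntegrableOn, volume_restrict_polarCoord_target] at hF'i hangular_int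
  rw [volume_restrict_polarCoord_target, integral_prod _ hangular_int]
  refine integral_eq_zero_of_ae ?_
  filter_upwards [hF'i.prod_right_ae, ae_restrict_mem measurableSet_Ioi] with r hF'r hr
  exact integral_Ioo_fderiv_circleMap (ne_of_gt hr) hF hF'r

end FundamentalTheorem

section CauchyPompeiu

theorem dbarInv_eq_integral_inv_sub_smul (h : ℂ → ℂ) (z : ℂ) :
    dbarInv h z = (Real.pi : ℂ)⁻¹ * ∫ w, (z - w)⁻¹ • h w := by
  simp only [dbarInv, smul_eq_mul, div_eq_inv_mul]

theorem dbarInv_add {g h : ℂ → ℂ} {z : ℂ} (hg : Integrable fun w => (z - w)⁻¹ • g w)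
    (hh : Integrable fun w => (z - w)⁻¹ • h w) :
    dbarInv (fun w => g w + h w) z = dbarInv g z + dbarInv h z := by
  simp only [dbarInv_eq_integral_inv_sub_smul, smul_add, integral_add hg hh, mul_add]

theorem dbarInv_const_mul (c : ℂ) (h : ℂ → ℂ) (z : ℂ) :
    dbarInv (fun w => c * h w) z = c * dbarInv h z := by
  simp only [dbarInv, mul_div_assoc, integral_const_mul, mul_left_comm c]

-- The complex linear part of `fderiv ℝ F w` cancels on the right, the antilinear part doubles.
theorem conj_mul_dbar (F : ℂ → ℂ) (u w : ℂ) :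
    conj u * dbar F w = (fderiv ℝ F w u + I * fderiv ℝ F w (u * I)) / 2 := by
  have hu : fderiv ℝ F w u = u.re * fderiv ℝ F w 1 + u.im * fderiv ℝ F w I := by
    simp only [← real_smul, ← map_smul, ← map_add]
    simp only [real_smul, mul_one, re_add_im]
  have huI : fderiv ℝ F w (u * I) = u.re * fderiv ℝ F w I - u.im * fderiv ℝ F w 1 := by
    simp only [← real_smul, ← map_smul, ← map_sub]
    congr 1
    apply Complex.ext <;> simp
  have hconj : conj u = u.re - u.im * I := by apply Complex.ext <;> simp
  rw [hu, huI, hconj, dbar]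
  linear_combination (-(u.im : ℂ) * fderiv ℝ F w I / 2) * I_mul_I

variable {F : ℂ → ℂ} {z : ℂ}

theorem integrable_inv_sub_smul_dbar (hF'i : Integrable fun w => (z - w)⁻¹ • fderiv ℝ F w) :
    Integrable fun w => (z - w)⁻¹ • dbar F w := by
  have h_one := hF'i.apply_continuousLinearMap 1
  have h_I := hF'i.apply_continuousLinearMap I
  refine ((h_one.add (h_I.const_mul I)).div_const 2).congr (ae_of_all _ fun w => ?_)
  simp only [dbar, Pi.add_apply, smul_apply, smul_eq_mul]
  ring

theorem dbarInv_dbar (hF : Differentiable ℝ F) (hFi : Integrable fun w => (z - w)⁻¹ • F w)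
    (hF'i : Integrable fun w => (z - w)⁻¹ • fderiv ℝ F w) : dbarInv (dbar F) z = F z := by
  have hF'p := integrableOn_circleMap hF'i
  have hradial_int : IntegrableOn
      (fun p : ℝ × ℝ => fderiv ℝ F (circleMap z p.1 p.2) (exp (p.2 * I))) polarCoord.target := by
    simpa only [IntegrableOn, mul_one] using integrable_clm_apply_exp_mul hF'p measurable_snd 1
  have hangular_int : IntegrableOn
      (fun p : ℝ × ℝ => fderiv ℝ F (circleMap z p.1 p.2) (exp (p.2 * I) * I))
      polarCoord.target :=
    integrable_clm_apply_exp_mul hF'p measurable_snd I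
  rw [dbarInv_eq_integral_inv_sub_smul, integral_inv_sub_smul]
  simp only [smul_eq_mul, conj_mul_dbar]
  rw [integral_div, integral_add hradial_int (hangular_int.const_mul I), integral_const_mul,
    integral_polarCoord_target_fderiv_radial hF (integrableOn_circleMap hFi) hF'p,
    integral_polarCoord_target_fderiv_angular hF hF'p, real_smul]
  have hpi : (Real.pi : ℂ) ≠ 0 := ofReal_ne_zero.2 Real.pi_ne_zero
  push_cast
  field_simp
  ring

end CauchyPompeiu

section Exponential

theorem norm_ek (k z : ℂ) : ‖ek k z‖ = 1 := by
  have hreal : conj k * z + k * conj z = ((2 * (conj k * z).re : ℝ) : ℂ) := by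
    rw [← add_conj, map_mul, conj_conj]
  rw [ek, hreal, mul_div_assoc, mul_comm, ← ofReal_ofNat, ← ofReal_div, norm_exp_ofReal_mul_I]

theorem continuous_ek (k : ℂ) : Continuous (ek k) := by
  unfold ek
  fun_prop

theorem hasFDerivAt_ek (k z : ℂ) :
    HasFDerivAt (ek k) (ek k z • ((I / 2) •
      (conj k • ContinuousLinearMap.id ℝ ℂ + k • (conjCLE : ℂ →L[ℝ] ℂ)))) z := by
  have hphase : HasFDerivAt (fun w : ℂ => I / 2 * (conj k * w + k * conj w))
      ((I / 2) • (conj k • ContinuousLinearMap.id ℝ ℂ + k • (conjCLE : ℂ →L[ℝ] ℂ))) z :=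
    (((hasFDerivAt_id z).const_mul _).add
      ((conjCLE : ℂ →L[ℝ] ℂ).hasFDerivAt.const_mul k)).const_mul _
  have hek : ek k = fun w => exp (I / 2 * (conj k * w + k * conj w)) := by
    funext w
    rw [ek, mul_div_right_comm]
  rw [hek]
  exact hphase.cexp

theorem dbar_ek (k z : ℂ) : dbar (ek k) z = I * k / 2 * ek k z := by
  rw [dbar, (hasFDerivAt_ek k z).fderiv]
  simp only [smul_add, add_apply, smul_apply, ContinuousLinearMap.id_apply, smul_eq_mul, mul_one,
    ContinuousLinearEquiv.coe_coe, ContinuousAlgEquiv.coeCLE_apply, conjCAE_apply, map_one, conj_I,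
    mul_neg]
  linear_combination (ek k z * I * (conj k - k) / 4) * I_mul_I

theorem dbar_mul {f g : ℂ → ℂ} {z : ℂ} (hf : DifferentiableAt ℝ f z)
    (hg : DifferentiableAt ℝ g z) :
    dbar (fun w => f w * g w) z = f z * dbar g z + dbar f z * g z := by
  simp only [dbar, fderiv_fun_mul hf hg, add_apply, smul_apply, smul_eq_mul]
  ring

theorem integrable_inv_sub_smul_ek_smul {E : Type*} [NormedAddCommGroup E] [NormedSpace ℂ E]
    {f : ℂ → E} {z : ℂ} (hf : Integrable fun w => (z - w)⁻¹ • f w) (k : ℂ) :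
    Integrable fun w => (z - w)⁻¹ • ek k w • f w := by
  simp only [smul_comm (_ : ℂ)⁻¹ (ek k _)]
  exact hf.bdd_smul 1 (continuous_ek k).aestronglyMeasurable
    (ae_of_all _ fun w => (norm_ek k w).le)

variable {G : ℂ → ℂ} {z : ℂ}

theorem integrable_inv_sub_smul_fderiv_ek_mul (hG : Differentiable ℝ G)
    (hGi : Integrable fun w => (z - w)⁻¹ • G w)
    (hG'i : Integrable fun w => (z - w)⁻¹ • fderiv ℝ G w) (k : ℂ) :
    Integrable fun w => (z - w)⁻¹ • fderiv ℝ (fun v => ek k v * G v) w := by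
  set L : ℂ →L[ℝ] ℂ :=
    (I / 2) • (conj k • ContinuousLinearMap.id ℝ ℂ + k • (conjCLE : ℂ →L[ℝ] ℂ))
  have hfderiv (w : ℂ) : fderiv ℝ (fun v => ek k v * G v) w =
      ek k w • fderiv ℝ G w + G w • ek k w • L :=
    ((hasFDerivAt_ek k w).mul (hG w).hasFDerivAt).fderiv
  refine ((integrable_inv_sub_smul_ek_smul hG'i k).add
    ((integrable_inv_sub_smul_ek_smul hGi k).smul_const L)).congr (ae_of_all _ fun w => ?_)
  simp only [hfderiv, Pi.add_apply, smul_add, smul_smul, smul_eq_mul, mul_comm (ek k w)]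

theorem dbarInv_ek_mul_dbar_add (hG : Differentiable ℝ G)
    (hGi : Integrable fun w => (z - w)⁻¹ • G w)
    (hG'i : Integrable fun w => (z - w)⁻¹ • fderiv ℝ G w) (k : ℂ) :
    dbarInv (fun w => ek k w * dbar G w) z + I * k / 2 * dbarInv (fun w => ek k w * G w) z =
      ek k z * G z := by
  have hek : Differentiable ℝ (ek k) := fun w => (hasFDerivAt_ek k w).differentiableAt
  have hekG_int : Integrable fun w => (z - w)⁻¹ • (ek k w * G w) :=
    integrable_inv_sub_smul_ek_smul hGi k
  have hekdbar_int : Integrable fun w => (z - w)⁻¹ • (ek k w * dbar G w) :=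
    integrable_inv_sub_smul_ek_smul (integrable_inv_sub_smul_dbar hG'i) k
  have hmul_int : Integrable fun w => (z - w)⁻¹ • (I * k / 2 * (ek k w * G w)) := by
    simpa only [smul_eq_mul, mul_left_comm _ (I * k / 2)] using hekG_int.const_mul (I * k / 2)
  have hdbar : dbar (fun w => ek k w * G w) =
      fun w => ek k w * dbar G w + I * k / 2 * (ek k w * G w) := by
    funext w
    rw [dbar_mul (hek w) (hG w), dbar_ek, mul_assoc]
  rw [← dbarInv_const_mul, ← dbarInv_add hekdbar_int hmul_int, ← hdbar]
  exact dbarInv_dbar (hek.fun_mul hG) hekG_int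
    (integrable_inv_sub_smul_fderiv_ek_mul hG hGi hG'i k)

end Exponential

theorem stmt5_general {G : ℂ → ℂ} {k z : ℂ} (hk : k ≠ 0) (hG : Differentiable ℝ G)
    (hGi : Integrable fun w => (z - w)⁻¹ • G w)
    (hG'i : Integrable fun w => (z - w)⁻¹ • fderiv ℝ G w) :
    dbarInv (fun w => ek (-k) w * G w) z =
        2 / (I * (k.re : ℂ) - (k.im : ℂ)) *
          (dbarInv (fun w => ek (-k) w * dbar G w) z - ek (-k) z * G z) ∧
      ‖dbarInv (fun w => ek (-k) w * G w) z‖ ≤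
        2 / ‖k‖ * (‖dbarInv (fun w => ek (-k) w * dbar G w) z‖ + ‖G z‖) := by
  have hIk : I * (k.re : ℂ) - (k.im : ℂ) = I * k := by
    apply Complex.ext <;> simp
  have hidentity : dbarInv (fun w => ek (-k) w * G w) z = 2 / (I * k) *
      (dbarInv (fun w => ek (-k) w * dbar G w) z - ek (-k) z * G z) := by
    rw [← dbarInv_ek_mul_dbar_add hG hGi hG'i (-k)]
    field_simp [I_ne_zero]
    ring
  refine ⟨hIk ▸ hidentity, ?_⟩
  calc ‖dbarInv (fun w => ek (-k) w * G w) z‖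
      = 2 / ‖k‖ * ‖dbarInv (fun w => ek (-k) w * dbar G w) z - ek (-k) z * G z‖ := by
        rw [hidentity, norm_mul, norm_div, norm_mul, norm_I, one_mul, Complex.norm_ofNat]
    _ ≤ 2 / ‖k‖ * (‖dbarInv (fun w => ek (-k) w * dbar G w) z‖ + ‖ek (-k) z * G z‖) := by
        gcongr
        exact norm_sub_le _ _
    _ = 2 / ‖k‖ * (‖dbarInv (fun w => ek (-k) w * dbar G w) z‖ + ‖G z‖) := by
        rw [norm_mul, norm_ek, one_mul]

/-- The pointwise identity behind \eqref{per}: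
`∂̄⁻¹[e_{-k}G](z) = (2/(ik₁-k₂))(∂̄⁻¹[e_{-k}∂̄G](z) - e_{-k}(z)G(z))` and the resulting
pointwise bound. -/
theorem stmt5 (G : 𝓢(ℂ, ℂ)) (k : ℂ) (hk : k ≠ 0) :
    (∀ z : ℂ, dbarInv (fun w => ek (-k) w * G w) z =
      2 / (Complex.I * (k.re : ℂ) - (k.im : ℂ)) *
        (dbarInv (fun w => ek (-k) w * dbar (⇑G) w) z - ek (-k) z * G z)) ∧
    ∀ z : ℂ, ‖dbarInv (fun w => ek (-k) w * G w) z‖ ≤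
      2 / ‖k‖ * (‖dbarInv (fun w => ek (-k) w * dbar (⇑G) w) z‖ + ‖G z‖) :=
  forall_and.1 fun z => stmt5_general hk G.differentiable
    (integrable_inv_sub_smul G.integrable (G.memLp ∞) z)
    (integrable_inv_sub_smul (SchwartzMap.fderivCLM ℝ ℂ ℂ G).integrable
      ((SchwartzMap.fderivCLM ℝ ℂ ℂ G).memLp ∞) z)
end

section
/- Let q : ℂ → ℂ be a Schwartz function and let k ∈ ℂ. If F : ℂ → ℂ is a bounded continuous function satisfying F = S^k_q[F] pointwise, then F is identically zero; that is, the operator I − S^k_q is injective on bounded continuous functions. -/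
open MeasureTheory Complex ComplexConjugate Filter Bornology
open scoped ENNReal Topology SchwartzMap

/-!
The integral equation is the integrated form of a Vekua equation. Put `a = e_{-k} q` and
`G = ∂̄⁻¹[a conj F]`; then `F = S^k_q[F]` reads `F = ∂̄⁻¹[a conj G]`, so that `u = F ± G` solves
`u = ± ∂̄⁻¹[a conj u]`, that is, `u = ∂̄⁻¹[b u]` with `b = ± a conj u / u`, and `|b| ≤ |a|`.

Classically `u exp(-∂̄⁻¹b)` is an entire function tending to `0` at infinity, hence zero by
Liouville's theorem. The same conclusion follows without differentiating: the identity
`1/((z-w)(z-v)) = 1/((z-w)(w-v)) + 1/((z-v)(v-w))` gives the Leibniz rule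
`∂̄⁻¹f ∂̄⁻¹g = ∂̄⁻¹[f ∂̄⁻¹g] + ∂̄⁻¹[g ∂̄⁻¹f]`, hence the chain rule
`∂̄⁻¹[-b E] = E - 1` for `E = exp(-∂̄⁻¹b)`, and the Leibniz rule applied to `b u` and `-b E` yields
`u (E - 1) = -u`, i.e. `u E = 0`.
-/

theorem memLp_top_comp_of_continuous {α E F : Type*} [MeasurableSpace α] {μ : Measure α}
    [NormedAddCommGroup E] [ProperSpace E] [NormedAddCommGroup F] {g : E → F} {f : α → E}
    (hg : Continuous g) (hf : MemLp f ∞ μ) : MemLp (g ∘ f) ∞ μ := by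
  obtain ⟨C, hC⟩ :=
    (isCompact_closedBall (0 : E) (lpNorm f ∞ μ)).exists_bound_of_continuousOn hg.continuousOn
  refine memLp_top_of_bound (hg.comp_aestronglyMeasurable hf.aestronglyMeasurable) C ?_
  filter_upwards [ae_le_lpNorm_exponent_top hf] with x hx
  exact hC _ (mem_closedBall_zero_iff.2 hx)

theorem memLp_top_star_div_self {α 𝕜 : Type*} [MeasurableSpace α] {μ : Measure α} [RCLike 𝕜]
    {u : α → 𝕜} (hu : AEStronglyMeasurable u μ) : MemLp (star u / u) ∞ μ := by
  refine memLp_top_of_bound (hu.star.div₀ hu) 1 (Eventually.of_forall fun w => ?_)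
  simpa using div_self_le_one ‖u w‖

theorem hasSum_pow_div_factorial_exp (x : ℂ) :
    HasSum (fun n : ℕ => x ^ n / n.factorial) (exp x) := by
  simpa only [exp_eq_exp_ℂ] using NormedSpace.expSeries_div_hasSum_exp x

theorem dbarInv_smul (c : ℂ) (f : ℂ → ℂ) : dbarInv (c • f) = c • dbarInv f := by
  ext z
  simp only [dbarInv, Pi.smul_apply, smul_eq_mul, mul_div_assoc, integral_const_mul]
  ring

theorem dbarInv_neg (f : ℂ → ℂ) : dbarInv (-f) = -dbarInv f := by
  simpa using dbarInv_smul (-1) f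

theorem dzInv_eq_star_dbarInv_star (f : ℂ → ℂ) : dzInv f = star (dbarInv (star f)) := by
  ext z
  simp only [dzInv, dbarInv, Pi.star_apply, RCLike.star_def, map_mul, map_inv₀, conj_ofReal,
    ← integral_conj, map_div₀, map_sub, conj_conj]

theorem integrableOn_ball_norm_inv {E : Type*} [NormedAddCommGroup E] [NormedSpace ℝ E]
    [FiniteDimensional ℝ E] [MeasurableSpace E] [BorelSpace E] (μ : Measure E)
    [μ.IsAddHaarMeasure] (hE : 1 < Module.finrank ℝ E) (r : ℝ) :
    IntegrableOn (fun x : E => ‖x‖⁻¹) (Metric.ball 0 r) μ := by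
  refine integrableOn_ball_of_norm_le_rpow (C := 1) (α := 1) hE.le (by exact_mod_cast hE)
    (Eventually.of_forall fun x => ?_) (by fun_prop)
  simp [Real.rpow_neg_one]

/-- The potential `z ↦ ∫ |f(w)| / |z - w| dA(w)` of `|f|` is finite and bounded on all of `ℂ`. This
is the class of densities on which `∂̄⁻¹` takes bounded values and iterated Cauchy transforms may be
computed by Fubini's theorem; integrability is a separate field because the Bochner integral of a
non-integrable function is `0`. -/
structure HasBoundedRieszPotential (f : ℂ → ℂ) : Prop where
  integrable_div : ∀ z, Integrable fun w => f w / (z - w)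
  exists_integral_norm_div_le : ∃ K, ∀ z, ∫ w, ‖f w / (z - w)‖ ≤ K

namespace HasBoundedRieszPotential

variable {f g : ℂ → ℂ}

theorem of_integrable_of_memLp_top (hf : Integrable f) (hf' : MemLp f ∞) :
    HasBoundedRieszPotential f := by
  set M := lpNorm f ∞ volume
  set κ : ℂ → ℝ := (Metric.ball (0 : ℂ) 1).indicator fun w => ‖w‖⁻¹ with hκ
  have hκi : Integrable κ :=
    (integrableOn_ball_norm_inv volume (by simp) 1).integrable_indicator measurableSet_ball
  have hκz : ∀ z, Integrable fun w => M * κ (z - w) := fun z =>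
    (hκi.comp_sub_left z).const_mul M
  have hle : ∀ z, ∀ᵐ w, ‖f w / (z - w)‖ ≤ M * κ (z - w) + ‖f w‖ := by
    intro z
    filter_upwards [ae_le_lpNorm_exponent_top hf'] with w hw
    rw [norm_div, div_eq_mul_inv]
    by_cases h : z - w ∈ Metric.ball (0 : ℂ) 1
    · rw [hκ, Set.indicator_of_mem h]
      exact le_add_of_le_of_nonneg (by gcongr) (norm_nonneg _)
    · rw [hκ, Set.indicator_of_notMem h, mul_zero, zero_add]
      refine mul_le_of_le_one_right (norm_nonneg _) (inv_le_one_of_one_le₀ ?_)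
      simpa using h
  have hint : ∀ z, Integrable fun w => f w / (z - w) := fun z =>
    ((hκz z).add hf.norm).mono'
      (hf.aestronglyMeasurable.div₀ (by fun_prop)) (hle z)
  refine ⟨hint, M * (∫ w, κ w) + ∫ w, ‖f w‖, fun z => ?_⟩
  calc ∫ w, ‖f w / (z - w)‖ ≤ ∫ w, (M * κ (z - w) + ‖f w‖) :=
        integral_mono_ae (hint z).norm ((hκz z).add hf.norm) (hle z)
    _ = M * (∫ w, κ w) + ∫ w, ‖f w‖ := by
        rw [integral_add (hκz z) hf.norm, integral_const_mul, integral_sub_left_eq_self κ volume z]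

theorem aestronglyMeasurable (hf : HasBoundedRieszPotential f) : AEStronglyMeasurable f := by
  have h : AEStronglyMeasurable fun w => f w / (0 - w) * (0 - w) :=
    (hf.integrable_div 0).aestronglyMeasurable.mul (by fun_prop)
  refine h.congr ?_
  filter_upwards [Measure.ae_ne volume (0 : ℂ)] with w hw
  exact div_mul_cancel₀ _ (sub_ne_zero.2 hw.symm)

theorem neg (hf : HasBoundedRieszPotential f) : HasBoundedRieszPotential (-f) where
  integrable_div z := by simpa only [Pi.neg_apply, neg_div] using (hf.integrable_div z).fun_neg
  exists_integral_norm_div_le := by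
    simpa only [Pi.neg_apply, neg_div, norm_neg] using hf.exists_integral_norm_div_le

theorem mul_memLp_top (hf : HasBoundedRieszPotential f) (hg : MemLp g ∞) :
    HasBoundedRieszPotential (f * g) := by
  have hdiv : ∀ z w, (f * g) w / (z - w) = f w / (z - w) * g w := fun z w =>
    mul_div_right_comm _ _ _
  obtain ⟨K, hK⟩ := hf.exists_integral_norm_div_le
  have hint : ∀ z, Integrable fun w => f w / (z - w) * g w := fun z =>
    (hf.integrable_div z).mul_of_top_left hg
  refine ⟨by simpa only [hdiv] using hint, K * lpNorm g ∞ volume, fun z => ?_⟩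
  simp only [hdiv]
  calc ∫ w, ‖f w / (z - w) * g w‖
      ≤ ∫ w, ‖f w / (z - w)‖ * lpNorm g ∞ volume := by
        refine integral_mono_ae (hint z).norm ((hf.integrable_div z).norm.mul_const _) ?_
        filter_upwards [ae_le_lpNorm_exponent_top hg] with w hw
        rw [norm_mul]
        gcongr
    _ ≤ K * lpNorm g ∞ volume := by
        rw [integral_mul_const]
        exact mul_le_mul_of_nonneg_right (hK z) lpNorm_nonneg

theorem dbarInv_add (hf : HasBoundedRieszPotential f) (hg : HasBoundedRieszPotential g) :
    dbarInv (f + g) = dbarInv f + dbarInv g := by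
  ext z
  simp only [dbarInv, Pi.add_apply, add_div, mul_add,
    integral_add (hf.integrable_div z) (hg.integrable_div z)]

theorem memLp_top_dbarInv (hf : HasBoundedRieszPotential f) : MemLp (dbarInv f) ∞ := by
  have hker : AEStronglyMeasurable (fun p : ℂ × ℂ => f p.2 / (p.1 - p.2))
      (volume.prod volume) :=
    hf.aestronglyMeasurable.comp_snd.div₀ (by fun_prop)
  obtain ⟨K, hK⟩ := hf.exists_integral_norm_div_le
  refine memLp_top_of_bound (hker.integral_prod_right'.const_mul _) (‖(Real.pi : ℂ)⁻¹‖ * K)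
    (Eventually.of_forall fun z => ?_)
  rw [dbarInv, norm_mul]
  gcongr
  exact (norm_integral_le_integral_norm _).trans (hK z)

theorem integrable_div_mul_div (hf : HasBoundedRieszPotential f)
    (hg : HasBoundedRieszPotential g) (z : ℂ) :
    Integrable (fun p : ℂ × ℂ => f p.1 / (z - p.1) * (g p.2 / (p.1 - p.2)))
      (volume.prod volume) := by
  have hmeas : AEStronglyMeasurable (fun p : ℂ × ℂ => f p.1 / (z - p.1) * (g p.2 / (p.1 - p.2)))
      (volume.prod volume) :=
    (hf.integrable_div z).aestronglyMeasurable.comp_fst.mul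
      (hg.aestronglyMeasurable.comp_snd.div₀ (by fun_prop))
  obtain ⟨K, hK⟩ := hg.exists_integral_norm_div_le
  refine (integrable_prod_iff hmeas).2
    ⟨Eventually.of_forall fun w => (hg.integrable_div w).const_mul (f w / (z - w)), ?_⟩
  refine ((hf.integrable_div z).norm.mul_const K).mono'
    hmeas.norm.integral_prod_right' (Eventually.of_forall fun w => ?_)
  rw [Real.norm_of_nonneg (integral_nonneg fun _ => norm_nonneg _)]
  simp only [norm_mul (f w / (z - w)), integral_const_mul]
  gcongr
  exact hK w

end HasBoundedRieszPotential

theorem ae_div_mul_div_eq_add (f g : ℂ → ℂ) (z : ℂ) :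
    ∀ᵐ p : ℂ × ℂ ∂(volume.prod volume), f p.1 / (z - p.1) * (g p.2 / (z - p.2)) =
      f p.1 / (z - p.1) * (g p.2 / (p.1 - p.2)) + g p.2 / (z - p.2) * (f p.1 / (p.2 - p.1)) := by
  have hfst : ∀ᵐ p : ℂ × ℂ ∂(volume.prod volume), p.1 ≠ z :=
    Measure.quasiMeasurePreserving_fst.ae (Measure.ae_ne volume z)
  have hsnd : ∀ᵐ p : ℂ × ℂ ∂(volume.prod volume), p.2 ≠ z :=
    Measure.quasiMeasurePreserving_snd.ae (Measure.ae_ne volume z)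
  have hdiag : ∀ᵐ p : ℂ × ℂ ∂(volume.prod volume), p.2 ≠ p.1 :=
    (Measure.ae_prod_iff_ae_ae (measurableSet_eq_fun measurable_snd measurable_fst).compl).2
      (Eventually.of_forall fun w => Measure.ae_ne volume w)
  filter_upwards [hfst, hsnd, hdiag] with p hw hv hvw
  have hzw : z - p.1 ≠ 0 := sub_ne_zero.2 hw.symm
  have hzv : z - p.2 ≠ 0 := sub_ne_zero.2 hv.symm
  have hwv : p.1 - p.2 ≠ 0 := sub_ne_zero.2 hvw.symm
  rw [← neg_sub p.1 p.2]
  field_simp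
  ring

theorem dbarInv_of_mul_dbarInv_eq_integral_integral (f g : ℂ → ℂ) (z : ℂ) :
    dbarInv (f * dbarInv g) z =
      (Real.pi : ℂ)⁻¹ ^ 2 * ∫ w, ∫ v, f w / (z - w) * (g v / (w - v)) := by
  have hker : ∀ w, f w * ((Real.pi : ℂ)⁻¹ * ∫ v, g v / (w - v)) / (z - w) =
      (Real.pi : ℂ)⁻¹ * (f w / (z - w) * ∫ v, g v / (w - v)) := fun w => by ring
  simp only [dbarInv, Pi.mul_apply, hker, integral_const_mul, pow_two, mul_assoc]

namespace HasBoundedRieszPotential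

variable {a b f g u φ : ℂ → ℂ}

theorem dbarInv_mul_dbarInv (hf : HasBoundedRieszPotential f) (hg : HasBoundedRieszPotential g) :
    dbarInv f * dbarInv g = dbarInv (f * dbarInv g) + dbarInv (g * dbarInv f) := by
  ext z
  have hfg := hf.integrable_div_mul_div hg z
  have hgf : Integrable (fun p : ℂ × ℂ => g p.2 / (z - p.2) * (f p.1 / (p.2 - p.1)))
      (volume.prod volume) := (hg.integrable_div_mul_div hf z).swap
  have key : (∫ w, f w / (z - w)) * ∫ v, g v / (z - v) =
      (∫ w, ∫ v, f w / (z - w) * (g v / (w - v))) +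
        ∫ v, ∫ w, g v / (z - v) * (f w / (v - w)) := by
    rw [← integral_prod_mul, integral_congr_ae (ae_div_mul_div_eq_add f g z),
      integral_add hfg hgf, integral_prod _ hfg, integral_prod_symm _ hgf]
  simp only [Pi.mul_apply, Pi.add_apply, dbarInv_of_mul_dbarInv_eq_integral_integral]
  rw [dbarInv, dbarInv]
  linear_combination (Real.pi : ℂ)⁻¹ ^ 2 * key

theorem mul_dbarInv_pow (hb : HasBoundedRieszPotential b) (n : ℕ) :
    HasBoundedRieszPotential (b * dbarInv b ^ n) :=
  hb.mul_memLp_top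
    (memLp_top_comp_of_continuous (g := (· ^ n)) (continuous_pow n) hb.memLp_top_dbarInv)

theorem dbarInv_pow_succ (hb : HasBoundedRieszPotential b) (n : ℕ) :
    dbarInv b ^ (n + 1) = (n + 1 : ℂ) • dbarInv (b * dbarInv b ^ n) := by
  induction n with
  | zero => simp
  | succ n ih =>
    have hprod : dbarInv (b * dbarInv b ^ n) * dbarInv b =
        dbarInv (b * dbarInv b ^ (n + 1)) + dbarInv (b * dbarInv (b * dbarInv b ^ n)) := by
      rw [(hb.mul_dbarInv_pow n).dbarInv_mul_dbarInv hb, mul_assoc, ← pow_succ]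
    calc dbarInv b ^ (n + 1 + 1)
        = (n + 1 : ℂ) • dbarInv (b * dbarInv b ^ (n + 1)) +
            dbarInv (b * (n + 1 : ℂ) • dbarInv (b * dbarInv b ^ n)) := by
          rw [pow_succ _ (n + 1)]
          nth_rw 1 [ih]
          rw [smul_mul_assoc, hprod, smul_add, mul_smul_comm, dbarInv_smul]
      _ = ((n + 1 : ℕ) + 1 : ℂ) • dbarInv (b * dbarInv b ^ (n + 1)) := by
          rw [← ih]
          push_cast
          module

theorem hasSum_dbarInv_mul_exp (hb : HasBoundedRieszPotential b) (hφ : MemLp φ ∞) (z : ℂ) :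
    HasSum (fun n : ℕ => dbarInv (b * φ ^ n) z / n.factorial) (dbarInv (b * exp ∘ φ) z) := by
  set C := lpNorm φ ∞ volume
  have hC : Summable fun n : ℕ => C ^ n / n.factorial := Real.summable_pow_div_factorial C
  have hsum : HasSum (fun n : ℕ => ∫ w, b w / (z - w) * (φ w ^ n / n.factorial))
      (∫ w, b w / (z - w) * exp (φ w)) := by
    refine hasSum_integral_of_dominated_convergence
      (fun n w => ‖b w / (z - w)‖ * (C ^ n / n.factorial)) (fun n => ?_) (fun n => ?_)
      (Eventually.of_forall fun w => hC.mul_left _) ?_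
      (Eventually.of_forall fun w => (hasSum_pow_div_factorial_exp (φ w)).mul_left _)
    · exact (hb.integrable_div z).aestronglyMeasurable.mul
        ((hφ.aestronglyMeasurable.pow n).div₀ aestronglyMeasurable_const)
    · filter_upwards [ae_le_lpNorm_exponent_top hφ] with w hw
      rw [norm_mul, norm_div (φ w ^ n), norm_pow, norm_natCast]
      gcongr
    · simp only [tsum_mul_left]
      exact (hb.integrable_div z).norm.mul_const _
  have hterm : ∀ n : ℕ, dbarInv (b * φ ^ n) z / n.factorial =
      (Real.pi : ℂ)⁻¹ * ∫ w, b w / (z - w) * (φ w ^ n / n.factorial) := by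
    intro n
    rw [dbarInv, mul_div_assoc, ← integral_div]
    simp only [Pi.mul_apply, Pi.pow_apply, mul_div_right_comm (b _), mul_div_assoc]
  have hlim : dbarInv (b * exp ∘ φ) z = (Real.pi : ℂ)⁻¹ * ∫ w, b w / (z - w) * exp (φ w) := by
    simp only [dbarInv, Pi.mul_apply, Function.comp_apply, mul_div_right_comm]
  simpa only [hterm, hlim] using hsum.mul_left (Real.pi : ℂ)⁻¹

theorem dbarInv_mul_exp_dbarInv (hb : HasBoundedRieszPotential b) :
    dbarInv (b * exp ∘ dbarInv b) = exp ∘ dbarInv b - 1 := by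
  ext z
  have hterm : ∀ n : ℕ, dbarInv (b * dbarInv b ^ n) z / n.factorial =
      dbarInv b z ^ (n + 1) / (n + 1).factorial := by
    intro n
    have hn : (n + 1 : ℂ) ≠ 0 := by exact_mod_cast n.succ_ne_zero
    rw [← Pi.pow_apply (dbarInv b), hb.dbarInv_pow_succ n, Pi.smul_apply, smul_eq_mul,
      Nat.factorial_succ]
    push_cast
    rw [mul_div_mul_left _ _ hn]
  have hexp := (hasSum_nat_add_iff' 1).2 (hasSum_pow_div_factorial_exp (dbarInv b z))
  have hsum := hb.hasSum_dbarInv_mul_exp hb.memLp_top_dbarInv z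
  simp only [hterm] at hsum
  simpa using hsum.unique hexp

theorem eq_zero_of_eq_dbarInv_mul (hb : HasBoundedRieszPotential b) (hu : MemLp u ∞)
    (h : u = dbarInv (b * u)) : u = 0 := by
  set E := exp ∘ dbarInv (-b)
  have hEtop : MemLp E ∞ :=
    memLp_top_comp_of_continuous continuous_exp hb.neg.memLp_top_dbarInv
  have hchain : dbarInv (-b * E) = E - 1 := hb.neg.dbarInv_mul_exp_dbarInv
  have hbu := hb.mul_memLp_top hu
  have hbE := hb.neg.mul_memLp_top hEtop
  have hE1 : MemLp (E - 1) ∞ := hchain ▸ hbE.memLp_top_dbarInv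
  have hleibniz : u * (E - 1) = -u :=
    calc u * (E - 1) = dbarInv (b * u) * dbarInv (-b * E) := by rw [← h, hchain]
      _ = dbarInv (b * u * (E - 1)) + dbarInv (-b * E * u) := by
          rw [hbu.dbarInv_mul_dbarInv hbE, hchain, ← h]
      _ = dbarInv (-(b * u)) := by
          rw [← (hbu.mul_memLp_top hE1).dbarInv_add (hbE.mul_memLp_top hu)]
          congr 1
          ring
      _ = -u := by rw [dbarInv_neg, ← h]
  have huE : u * E = 0 := by linear_combination hleibniz
  ext z
  exact (mul_eq_zero.1 (congrFun huE z)).resolve_right (exp_ne_zero _)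

theorem eq_zero_of_eq_dbarInv_mul_star (ha : HasBoundedRieszPotential a)
    (hu : MemLp u ∞) (h : u = dbarInv (a * star u)) : u = 0 := by
  have hmul : a * star u = a * (star u / u) * u := by
    ext w
    rw [mul_assoc, Pi.mul_apply, Pi.mul_apply, Pi.mul_apply, Pi.div_apply,
      div_mul_cancel_of_imp fun hw => by simp [hw]]
  rw [hmul] at h
  have hphase : MemLp (star u / u) ∞ := memLp_top_star_div_self hu.aestronglyMeasurable
  exact (ha.mul_memLp_top hphase).eq_zero_of_eq_dbarInv_mul hu h

theorem eq_zero_of_eq_dbarInv_mul_star_swap (ha : HasBoundedRieszPotential a)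
    (hf : MemLp f ∞) (hg : MemLp g ∞) (hfg : f = dbarInv (a * star g))
    (hgf : g = dbarInv (a * star f)) : f = 0 := by
  have haf := ha.mul_memLp_top hf.star
  have hag := ha.mul_memLp_top hg.star
  have hadd : f + g = 0 := by
    refine ha.eq_zero_of_eq_dbarInv_mul_star (hf.add hg) ?_
    rw [star_add, mul_add, haf.dbarInv_add hag, ← hfg, ← hgf, add_comm]
  have hsub : f - g = 0 := by
    refine ha.neg.eq_zero_of_eq_dbarInv_mul_star (hf.sub hg) ?_
    rw [star_sub, neg_mul, mul_sub, neg_sub, sub_eq_add_neg (a * star g), hag.dbarInv_add haf.neg,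
      dbarInv_neg, ← hfg, ← hgf, sub_eq_add_neg]
  ext z
  have hadd_z : f z + g z = 0 := congrFun hadd z
  have hsub_z : f z - g z = 0 := congrFun hsub z
  simp only [Pi.zero_apply]
  linear_combination (hadd_z + hsub_z) / 2

end HasBoundedRieszPotential

theorem star_ek (k : ℂ) : star (ek k) = ek (-k) := by
  ext z
  simp only [Pi.star_apply, RCLike.star_def, ek, ← exp_conj, map_div₀, map_mul, map_add, conj_I,
    conj_conj, map_neg, map_ofNat]
  congr 1
  ring

theorem memLp_top_ek (k : ℂ) : MemLp (ek k) ∞ := by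
  have hcont : Continuous (ek k) := by
    unfold ek
    fun_prop
  exact memLp_top_of_bound hcont.aestronglyMeasurable 1
    (Eventually.of_forall fun z => (norm_ek k z).le)

theorem Sk_eq_dbarInv_mul_star (k : ℂ) (q F : ℂ → ℂ) :
    Sk k q F = dbarInv (q * ek (-k) * star (dbarInv (q * ek (-k) * star F))) := by
  have hstar : star (fun w => ek k w * conj (q w) * F w) = q * ek (-k) * star F := by
    rw [← star_ek]
    ext w
    simp only [Pi.star_apply, Pi.mul_apply, RCLike.star_def, map_mul, conj_conj]
    ring
  rw [Sk, dzInv_eq_star_dbarInv_star, hstar]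
  congr 1 with z
  simp only [Pi.mul_apply]
  ring

theorem stmt12_general {q F : ℂ → ℂ} (k : ℂ) (hq : HasBoundedRieszPotential q)
    (hF : MemLp F ∞) (hfix : F = Sk k q F) : F = 0 := by
  have ha : HasBoundedRieszPotential (q * ek (-k)) := hq.mul_memLp_top (memLp_top_ek (-k))
  exact ha.eq_zero_of_eq_dbarInv_mul_star_swap hF (ha.mul_memLp_top hF.star).memLp_top_dbarInv
    (hfix.trans (Sk_eq_dbarInv_mul_star k q F)) rfl

/-- Injectivity of `I - S^k_q` on bounded continuous functions. -/
theorem stmt12 (q : 𝓢(ℂ, ℂ)) (k : ℂ) (F : ℂ → ℂ) (hFc : Continuous F)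
    (hFb : IsBounded (Set.range F)) (hfix : ∀ z : ℂ, F z = Sk k (⇑q) F z) :
    F = 0 := by
  obtain ⟨M, hM⟩ := hFb.exists_norm_le
  have hF : MemLp F ∞ := memLp_top_of_bound hFc.aestronglyMeasurable M
    (Eventually.of_forall fun z => hM _ (Set.mem_range_self z))
  exact stmt12_general k (.of_integrable_of_memLp_top q.integrable (q.memLp_top volume)) hF
    (funext hfix)
end
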